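/- Fix α ≥ 1 and an integer n ≥ 1. Suppose that for every β > 0 eigen-data (P(β), H_β, ν_β) for (α,β) is given, with each H_β locally ring-constant, and let μ_β be the associated Gibbs measure. Then (1/β)·log( μ_β([0^n*₀]) / μ_β([1^n*₁]) ) → 0 as β → +∞. -/

import Mathlib

/-!
For large `β` the Gibbs ratio is bounded above and below by absolute constants (`1/4` and `32`),
which is more than the subexponential behaviour claimed.

Put `u_m = e^{-mP} e^{-β(1-2^{-m})}`, `v_m = e^{-mP} e^{-3β(1-2^{-m})}`, `U = ∑_{m≥1} u_m`,
`V = ∑_{m≥1} v_m`, and let `U_n`, `V_n` be the tails starting at `m = n`.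

*Measure side.* Testing conformality of `ν` on indicators of clopen sets gives
`ν[0^m*] = u_m ν(Σ \ [0])`, and since `P > 0` forces `ν{0^∞} = 0`, summation over the rings yields
`ν(Σ \ [0]) = 1/(1+U)`; likewise for the letter `1` with `V` (`ring_mass`, `ring_zero_mul_tailSum`).
Total mass one then reads `1/(1+U) + 1/(1+V) = 1 + e^{-P-αβ}` (`ring_zero_add`).

*Function side.* On rings the eigenvalue equation is an affine recursion whose bounded solution is
`u_n H[0^n*] = e^{-P} K U_n`, `v_n H[1^n*] = e^{-P} K' V_n`, where `K U ≤ K' ≤ K (1+U)`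
(`recursion_solution`, `eigenfun_rings`). Hence the ratio equals
`(K/K') (U_n/V_n) (1+V)/(1+U)`.

*Estimates.* If `P > e^{-7β/4}`, then `U` and `V` are too small for the mass identity
(`pressure_le`; this uses `α ≥ 1`). So `P ≤ e^{-7β/4}`, and then the tails dominate the sums:
`U_n ≥ U/2`, `V_n ≥ V/2`, `U ≥ 1` (`tail_half`). Finally the mass identity gives
`V (1+U)/(1+V) = 1 - e^{-P-αβ}(1+U)`, which lies in `[1/16, 1]` because `V ≥ e^{-2β} U`
(`tailSum_compare`, `ratio_bounds`).
-/

open MeasureTheory Filter Topology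

noncomputable section

/-- The full shift space `Σ = {0,1,2}^ℕ`. -/
abbrev Sig : Type := ℕ → Fin 3

/-- The shift map `σ`. -/
def shift (x : Sig) : Sig := fun n => x (n + 1)

/-- The fixed point `0^∞`. -/
def zeroSeq : Sig := fun _ => 0

/-- The fixed point `1^∞`. -/
def oneSeq : Sig := fun _ => 1

/-- Prepending a symbol: `a·x = (a, x₀, x₁, …)`. -/
def cons (a : Fin 3) (x : Sig) : Sig := fun n => Nat.casesOn n a x

open Classical in
/-- The metric `d(x,y) = (1/2)^(min{n : x n ≠ y n})`, with `d(x,x) = 0`. -/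
def dist3 (x y : Sig) : ℝ :=
  if h : x ≠ y then (1 / 2 : ℝ) ^ Nat.find (Function.ne_iff.mp h) else 0

/-- The potential `A_α`. -/
def pot (α : ℝ) (x : Sig) : ℝ :=
  if x 0 = 0 then -dist3 x zeroSeq
  else if x 0 = 1 then -(3 * dist3 x oneSeq)
  else -α

/-- The transfer operator `L_β` (for parameter `α`). -/
def transfer (α β : ℝ) (f : Sig → ℝ) : Sig → ℝ :=
  fun x => ∑ a : Fin 3, Real.exp (β * pot α (cons a x)) * f (cons a x)

/-- The ring `[a^n *_a] = {x : x_i = a for i < n, x_n ≠ a}`. -/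
def ringSet (a : Fin 3) (n : ℕ) : Set Sig := {x | (∀ i < n, x i = a) ∧ x n ≠ a}

/-- The cylinder `[a] = {x : x₀ = a}`. -/
def cyl (a : Fin 3) : Set Sig := {x | x 0 = a}

/-- `H` is locally ring-constant: constant on `[2]` and on each ring `[0^m*₀]`, `[1^m*₁]`. -/
def LocallyRingConstant (H : Sig → ℝ) : Prop :=
  (∀ x ∈ cyl 2, ∀ y ∈ cyl 2, H x = H y) ∧
  (∀ m : ℕ, 1 ≤ m → ∀ x ∈ ringSet 0 m, ∀ y ∈ ringSet 0 m, H x = H y) ∧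
  (∀ m : ℕ, 1 ≤ m → ∀ x ∈ ringSet 1 m, ∀ y ∈ ringSet 1 m, H x = H y)

/-- An eigen-measure for `(α,β)` with exponent `P`:  a Borel probability measure `ν`
with `P > 0` and `∫ L_β f dν = e^P ∫ f dν` for every continuous `f`. -/
structure IsEigenMeasure (α β P : ℝ) (ν : Measure Sig) : Prop where
  P_pos : 0 < P
  prob : IsProbabilityMeasure ν
  eigenMeas : ∀ f : Sig → ℝ, Continuous f →
    ∫ x, transfer α β f x ∂ν = Real.exp P * ∫ x, f x ∂ν

/-- Eigen-data `(P, H, ν)` for `(α,β)`. -/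
structure IsEigenData (α β P : ℝ) (H : Sig → ℝ) (ν : Measure Sig) : Prop where
  P_pos : 0 < P
  H_cont : Continuous H
  H_pos : ∀ x, 0 < H x
  eigenFun : ∀ x, transfer α β H x = Real.exp P * H x
  prob : IsProbabilityMeasure ν
  eigenMeas : ∀ f : Sig → ℝ, Continuous f →
    ∫ x, transfer α β f x ∂ν = Real.exp P * ∫ x, f x ∂ν

/-- The Gibbs measure `μ(B) = (∫_B H dν)/(∫ H dν)`. -/
def gibbs (H : Sig → ℝ) (ν : Measure Sig) : Measure Sig :=
  (ν.withDensity (fun x => ENNReal.ofReal (H x)) Set.univ)⁻¹ •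
    ν.withDensity (fun x => ENNReal.ofReal (H x))

/-- Weak convergence (as `β → +∞`) of a family of measures to a measure `μ∞`:
convergence of integrals of every bounded continuous function. -/
def WeakLimit (μ : ℝ → Measure Sig) (μlim : Measure Sig) : Prop :=
  ∀ f : Sig → ℝ, Continuous f → (∃ C : ℝ, ∀ x, |f x| ≤ C) →
    Tendsto (fun β => ∫ x, f x ∂(μ β)) atTop (nhds (∫ x, f x ∂μlim))

/-- `F(Z,β) = Σ_{k=0}^∞ e^{−kZ}·e^{β/2^{k+1}}`. -/
def Ffun (Z β : ℝ) : ℝ := ∑' k : ℕ, Real.exp (-(k : ℝ) * Z) * Real.exp (β / 2 ^ (k + 1))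

/-- `Fpartial Z β m = F_{m-1}(Z,β) = Σ_{k=0}^{m-1} e^{−kZ}·e^{β/2^{k+1}}` (so `Fpartial Z β 0 = F_{-1} = 0`). -/
def Fpartial (Z β : ℝ) (m : ℕ) : ℝ :=
  ∑ k ∈ Finset.range m, Real.exp (-(k : ℝ) * Z) * Real.exp (β / 2 ^ (k + 1))

/-! ### Combinatorics of rings and the potential -/

lemma cons_zero_eq (a : Fin 3) (x : Sig) : cons a x 0 = a := rfl

lemma cons_succ_eq (a : Fin 3) (x : Sig) (n : ℕ) : cons a x (n + 1) = x n := rfl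

/-- The cylinder `[a^m]` of sequences whose first `m` letters are `a`. -/
def blockSet (a : Fin 3) (m : ℕ) : Set Sig := {x | ∀ i < m, x i = a}

lemma isClopen_coord (a : Fin 3) (i : ℕ) : IsClopen {x : Sig | x i = a} :=
  (isClopen_discrete ({a} : Set (Fin 3))).preimage (continuous_apply i)

lemma isClopen_blockSet (a : Fin 3) (m : ℕ) : IsClopen (blockSet a m) := by
  have h : blockSet a m = ⋂ i ∈ Finset.range m, {x : Sig | x i = a} := by
    ext x; simp [blockSet]
  rw [h]
  exact isClopen_biInter_finset fun i _ => isClopen_coord a i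

lemma isClopen_ringSet (a : Fin 3) (m : ℕ) : IsClopen (ringSet a m) :=
  (isClopen_blockSet a m).inter (isClopen_coord a m).compl

lemma cons_mem_blockSet (a b : Fin 3) (m : ℕ) (x : Sig) :
    cons b x ∈ blockSet a (m + 1) ↔ b = a ∧ x ∈ blockSet a m := by
  constructor
  · intro h
    exact ⟨h 0 (Nat.succ_pos m), fun i hi => h (i + 1) (Nat.succ_lt_succ hi)⟩
  · rintro ⟨h, hx⟩ i hi
    cases i with
    | zero => exact h
    | succ k => exact hx k (Nat.lt_of_succ_lt_succ hi)

lemma cons_mem_ringSet (a b : Fin 3) (m : ℕ) (x : Sig) :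
    cons b x ∈ ringSet a (m + 1) ↔ b = a ∧ x ∈ ringSet a m := by
  have h := cons_mem_blockSet a b m x
  constructor
  · rintro ⟨h1, h2⟩
    exact ⟨(h.1 h1).1, (h.1 h1).2, h2⟩
  · rintro ⟨h1, h2, h3⟩
    exact ⟨h.2 ⟨h1, h2⟩, h3⟩

/-- The explicit point `a^m b b b …`, a representative of the ring `[a^m*_a]` when `b ≠ a`. -/
def ringPt (a b : Fin 3) (m : ℕ) : Sig := fun i => if i < m then a else b

lemma ringPt_mem {a b : Fin 3} (h : b ≠ a) (m : ℕ) : ringPt a b m ∈ ringSet a m :=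
  ⟨fun i hi => by simp [ringPt, hi], by simp [ringPt, h]⟩

lemma dist3_of_mem_ringSet {a : Fin 3} {m : ℕ} {x : Sig} (hx : x ∈ ringSet a m) :
    dist3 x (fun _ => a) = (1 / 2 : ℝ) ^ m := by
  classical
  have hne : x ≠ fun _ => a := fun h => hx.2 (by rw [h])
  unfold dist3
  rw [dif_pos hne]
  congr 1
  rw [Nat.find_eq_iff]
  exact ⟨hx.2, fun k hk => by simpa using hx.1 k hk⟩

lemma dist3_nonneg (x y : Sig) : 0 ≤ dist3 x y := by
  unfold dist3
  split_ifs <;> positivity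

/-- `PotRate α a κ` says that the potential equals `-κ 2^{-m}` on every ring `[a^m*_a]`, `m ≥ 1`.
It holds for `(a, κ) = (0, 1)` and `(1, 3)`, so both fixed points are treated at once. -/
def PotRate (α : ℝ) (a : Fin 3) (κ : ℝ) : Prop :=
  ∀ m : ℕ, ∀ x ∈ ringSet a (m + 1), pot α x = -(κ * (1 / 2 : ℝ) ^ (m + 1))

lemma potRate_zero (α : ℝ) : PotRate α 0 1 := by
  intro m x hx
  have h0 : x 0 = 0 := hx.1 0 (Nat.succ_pos m)
  have h := dist3_of_mem_ringSet hx
  simp only [pot, h0, if_true, one_mul]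
  rw [← h]; rfl

lemma potRate_one (α : ℝ) : PotRate α 1 3 := by
  intro m x hx
  have h0 : x 0 = 1 := hx.1 0 (Nat.succ_pos m)
  have h := dist3_of_mem_ringSet hx
  simp only [pot, h0, if_true]
  rw [← h]
  rfl

lemma pot_two (α : ℝ) (x : Sig) : pot α (cons 2 x) = -α := by
  simp [pot, cons_zero_eq]

lemma pot_nonpos {α : ℝ} (hα : 1 ≤ α) (x : Sig) : pot α x ≤ 0 := by
  have h0 := dist3_nonneg x zeroSeq
  have h1 := dist3_nonneg x oneSeq
  unfold pot
  split_ifs <;> linarith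

/-! ### The conformal measure -/

/-- Conformality of `ν` tested on the indicator of a clopen set `S = a·T`. -/
lemma eigen_indicator {α β P : ℝ} {H : Sig → ℝ} {ν : Measure Sig} (h : IsEigenData α β P H ν)
    {a : Fin 3} {S T : Set Sig} (hS : IsClopen S)
    (hST : ∀ b x, cons b x ∈ S ↔ b = a ∧ x ∈ T) :
    ∫ x, T.indicator (fun x => Real.exp (β * pot α (cons a x))) x ∂ν
      = Real.exp P * ν.real S := by
  have hc : Continuous (S.indicator (1 : Sig → ℝ)) := by
    rw [← LocallyConstant.coe_charFn ℝ hS]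
    exact (LocallyConstant.charFn ℝ hS).continuous
  have := h.eigenMeas _ hc
  rw [integral_indicator_one hS.isOpen.measurableSet] at this
  rw [← this]
  congr 1
  ext x
  classical
  unfold transfer
  rw [Finset.sum_eq_single a]
  · by_cases hx : x ∈ T
    · have : cons a x ∈ S := (hST a x).2 ⟨rfl, hx⟩
      simp [hx, this]
    · have : cons a x ∉ S := fun h' => hx ((hST a x).1 h').2
      simp [hx, this]
  · intro b _ hb
    have : cons b x ∉ S := fun h' => hb ((hST b x).1 h').1
    simp [this]
  · simp

lemma eigen_const {α β P : ℝ} {H : Sig → ℝ} {ν : Measure Sig} (h : IsEigenData α β P H ν)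
    {a : Fin 3} {S T : Set Sig} (hS : IsClopen S) (hT : IsClopen T)
    (hST : ∀ b x, cons b x ∈ S ↔ b = a ∧ x ∈ T) {w : ℝ}
    (hw : ∀ x ∈ T, pot α (cons a x) = w) :
    Real.exp P * ν.real S = Real.exp (β * w) * ν.real T := by
  rw [← eigen_indicator h hS hST]
  have : T.indicator (fun x => Real.exp (β * pot α (cons a x)))
      = T.indicator (fun _ => Real.exp (β * w)) := by
    apply Set.indicator_congr
    intro x hx
    simp [hw x hx]
  rw [this, integral_indicator_const _ hT.isOpen.measurableSet]
  simp [mul_comm]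

lemma eigen_block_le {α β P : ℝ} (hα : 1 ≤ α) (hβ : 0 < β) {H : Sig → ℝ} {ν : Measure Sig}
    (h : IsEigenData α β P H ν) (a : Fin 3) (m : ℕ) :
    ν.real (blockSet a m) ≤ Real.exp (-P) ^ m := by
  have := h.prob
  induction m with
  | zero => simp
  | succ m ih =>
    have h1 := eigen_indicator h (isClopen_blockSet a (m + 1))
      (fun b x => cons_mem_blockSet a b m x)
    have h2 : ∫ x, (blockSet a m).indicator (fun x => Real.exp (β * pot α (cons a x))) x ∂ν
        ≤ ∫ x, (blockSet a m).indicator (fun _ => (1 : ℝ)) x ∂ν := by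
      apply integral_mono_of_nonneg
      · exact Eventually.of_forall fun x => Set.indicator_nonneg (fun _ _ => (Real.exp_pos _).le) x
      · exact (integrable_const (1 : ℝ)).indicator (isClopen_blockSet a m).isOpen.measurableSet
      · refine Eventually.of_forall fun x => ?_
        apply Set.indicator_le_indicator
        rw [Real.exp_le_one_iff]
        exact mul_nonpos_of_nonneg_of_nonpos hβ.le (pot_nonpos hα _)
    rw [integral_indicator_const _ (isClopen_blockSet a m).isOpen.measurableSet, h1] at h2
    simp only [smul_eq_mul, mul_one] at h2
    have h3 : Real.exp (-P) * (Real.exp P * ν.real (blockSet a (m + 1)))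
        = ν.real (blockSet a (m + 1)) := by
      rw [← mul_assoc, ← Real.exp_add]; simp
    rw [← h3, pow_succ']
    exact mul_le_mul_of_nonneg_left (h2.trans ih) (Real.exp_pos _).le

/-! ### The weights and their tails -/

/-- The weight `u_m = e^{-mP} e^{-κβ(1-2^{-m})}`: exponential of `-mP` plus `β` times the Birkhoff
sum of the potential along the `m` initial letters of a point of the ring `[a^m*_a]`. -/
def wt (κ β P : ℝ) (m : ℕ) : ℝ :=
  Real.exp (-P) ^ m * Real.exp (-(κ * β * (1 - (1 / 2 : ℝ) ^ m)))

/-- The tail sum `∑_{m ≥ n} u_m`. -/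
def tailSum (κ β P : ℝ) (n : ℕ) : ℝ := ∑' m, wt κ β P (m + n)

lemma wt_pos (κ β P : ℝ) (m : ℕ) : 0 < wt κ β P m := by unfold wt; positivity

lemma wt_zero (κ β P : ℝ) : wt κ β P 0 = 1 := by simp [wt]

lemma wt_succ (κ β P : ℝ) (m : ℕ) :
    wt κ β P (m + 1) = Real.exp (-P) * Real.exp (-(κ * β * (1 / 2 : ℝ) ^ (m + 1))) * wt κ β P m := by
  unfold wt
  have : -(κ * β * (1 - (1 / 2 : ℝ) ^ (m + 1)))
      = -(κ * β * (1 / 2 : ℝ) ^ (m + 1)) + -(κ * β * (1 - (1 / 2 : ℝ) ^ m)) := by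
    rw [pow_succ]; ring
  rw [this, Real.exp_add, pow_succ]; ring

lemma exp_neg_lt_one {P : ℝ} (hP : 0 < P) : Real.exp (-P) < 1 := by
  rw [Real.exp_lt_one_iff]; linarith

lemma wt_le_of_le {κ β : ℝ} (P : ℝ) (hκ : 0 ≤ κ) (hβ : 0 < β) {N m : ℕ} (h : N ≤ m) :
    wt κ β P m ≤ Real.exp (-P) ^ m * Real.exp (-(κ * β * (1 - (1 / 2 : ℝ) ^ N))) := by
  unfold wt
  have : (1 / 2 : ℝ) ^ m ≤ (1 / 2 : ℝ) ^ N :=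
    pow_le_pow_of_le_one (by norm_num) (by norm_num) h
  gcongr

lemma wt_le_pow {κ β : ℝ} (P : ℝ) (hκ : 0 ≤ κ) (hβ : 0 < β) (m : ℕ) :
    wt κ β P m ≤ Real.exp (-P) ^ m := by
  simpa using wt_le_of_le P hκ hβ (Nat.zero_le m)

lemma wt_ge {κ β : ℝ} (P : ℝ) (hκ : 0 ≤ κ) (hβ : 0 < β) (m : ℕ) :
    Real.exp (-P) ^ m * Real.exp (-(κ * β)) ≤ wt κ β P m := by
  have : 0 ≤ κ * β * (1 / 2 : ℝ) ^ m := by positivity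
  refine mul_le_mul_of_nonneg_left (Real.exp_le_exp.2 ?_) (by positivity)
  linarith

lemma wt_summable {κ β P : ℝ} (hκ : 0 ≤ κ) (hβ : 0 < β) (hP : 0 < P) : Summable (wt κ β P) :=
  Summable.of_nonneg_of_le (fun m => (wt_pos κ β P m).le) (fun m => wt_le_pow P hκ hβ m)
    (summable_geometric_of_lt_one (Real.exp_pos _).le (exp_neg_lt_one hP))

lemma wt_tail_summable {κ β P : ℝ} (hκ : 0 ≤ κ) (hβ : 0 < β) (hP : 0 < P) (n : ℕ) :
    Summable fun m => wt κ β P (m + n) :=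
  (summable_nat_add_iff n).2 (wt_summable hκ hβ hP)

lemma tailSum_succ {κ β P : ℝ} (hκ : 0 ≤ κ) (hβ : 0 < β) (hP : 0 < P) (n : ℕ) :
    tailSum κ β P n = wt κ β P n + tailSum κ β P (n + 1) := by
  unfold tailSum
  rw [(wt_tail_summable hκ hβ hP n).tsum_eq_zero_add]
  simp [add_assoc, add_comm 1 n]

lemma tailSum_pos {κ β P : ℝ} (hκ : 0 ≤ κ) (hβ : 0 < β) (hP : 0 < P) (n : ℕ) : 0 < tailSum κ β P n :=
  (wt_tail_summable hκ hβ hP n).tsum_pos (fun _ => (wt_pos _ _ _ _).le) 0 (wt_pos _ _ _ _)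

lemma tailSum_ge {κ β P : ℝ} (hκ : 0 ≤ κ) (hβ : 0 < β) (hP : 0 < P) (n : ℕ) :
    Real.exp (-(κ * β)) * Real.exp (-P) ^ n / P ≤ tailSum κ β P n := by
  have hr := exp_neg_lt_one hP
  have h1 : HasSum (fun m => Real.exp (-P) ^ m * (Real.exp (-P) ^ n * Real.exp (-(κ * β))))
      ((1 - Real.exp (-P))⁻¹ * (Real.exp (-P) ^ n * Real.exp (-(κ * β)))) :=
    (hasSum_geometric_of_lt_one (Real.exp_pos _).le hr).mul_right _
  have h2 : (1 - Real.exp (-P))⁻¹ * (Real.exp (-P) ^ n * Real.exp (-(κ * β)))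
      ≤ tailSum κ β P n := by
    refine hasSum_le (fun m => ?_) h1 (wt_tail_summable hκ hβ hP n).hasSum
    rw [← mul_assoc, ← pow_add]
    exact wt_ge P hκ hβ (m + n)
  refine le_trans ?_ h2
  have h3 : 1 - Real.exp (-P) ≤ P := by linarith [Real.add_one_le_exp (-P)]
  have h4 : P⁻¹ ≤ (1 - Real.exp (-P))⁻¹ := inv_anti₀ (by linarith) h3
  calc _ = P⁻¹ * (Real.exp (-P) ^ n * Real.exp (-(κ * β))) := by field_simp
    _ ≤ _ := by gcongr

lemma wt_le_half {κ β P : ℝ} (hκ : 0 ≤ κ) (hβ : 0 < β) (hP : 0 < P) {m : ℕ} (hm : 1 ≤ m) :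
    wt κ β P m ≤ Real.exp (-(κ * β / 2)) := by
  refine (wt_le_of_le P hκ hβ hm).trans ?_
  have : Real.exp (-P) ^ m ≤ 1 := pow_le_one₀ (Real.exp_pos _).le (exp_neg_lt_one hP).le
  calc _ ≤ 1 * Real.exp (-(κ * β * (1 - (1 / 2 : ℝ) ^ 1))) := by gcongr
    _ = _ := by rw [one_mul]; congr 1; ring

lemma tailSum_one_le_add {κ β P : ℝ} (hκ : 0 ≤ κ) (hβ : 0 < β) (hP : 0 < P) (n : ℕ) :
    tailSum κ β P 1 ≤ n * Real.exp (-(κ * β / 2)) + tailSum κ β P (n + 1) := by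
  induction n with
  | zero => simp
  | succ n ih =>
    have h1 := tailSum_succ hκ hβ hP (n + 1)
    have h2 := wt_le_half hκ hβ hP (Nat.le_add_left 1 n)
    push_cast
    linarith

lemma tailSum_one_le {κ β P : ℝ} (hκ : 0 ≤ κ) (hβ : 0 < β) (hP : 0 < P) :
    tailSum κ β P 1 ≤ 4 * Real.exp (-(κ * β / 2)) + Real.exp (-(κ * β * (15 / 16))) / P := by
  have h := tailSum_one_le_add hκ hβ hP 4
  push_cast at h
  refine h.trans ?_
  gcongr
  have hr := exp_neg_lt_one hP
  have h1 : HasSum (fun m => Real.exp (-P) ^ m * (Real.exp (-P) * Real.exp (-(κ * β * (15 / 16)))))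
      ((1 - Real.exp (-P))⁻¹ * (Real.exp (-P) * Real.exp (-(κ * β * (15 / 16))))) :=
    (hasSum_geometric_of_lt_one (Real.exp_pos _).le hr).mul_right _
  have h2 : tailSum κ β P (4 + 1) ≤
      (1 - Real.exp (-P))⁻¹ * (Real.exp (-P) * Real.exp (-(κ * β * (15 / 16)))) := by
    refine hasSum_le (fun m => ?_) (wt_tail_summable hκ hβ hP _).hasSum h1
    refine (wt_le_of_le P hκ hβ (show 4 ≤ m + (4 + 1) by omega)).trans ?_
    rw [← mul_assoc, ← pow_succ]
    have : (1 - (1 / 2 : ℝ) ^ 4) = 15 / 16 := by norm_num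
    rw [this]
    have : Real.exp (-P) ^ (m + (4 + 1)) ≤ Real.exp (-P) ^ (m + 1) :=
      pow_le_pow_of_le_one (Real.exp_pos _).le hr.le (by omega)
    gcongr
  refine h2.trans ?_
  -- `e^{-P}/(1-e^{-P}) = 1/(e^P-1) ≤ 1/P`
  have h3 : P * Real.exp (-P) ≤ 1 - Real.exp (-P) := by
    have h4 := Real.add_one_le_exp P
    have h5 : Real.exp P * Real.exp (-P) = 1 := by rw [← Real.exp_add]; simp
    nlinarith [Real.exp_pos (-P)]
  have h6 : 0 < 1 - Real.exp (-P) := by linarith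
  rw [← mul_assoc, le_div_iff₀ hP, inv_mul_eq_div, div_mul_eq_mul_div, div_mul_eq_mul_div,
    div_le_iff₀ h6]
  nlinarith [Real.exp_pos (-(κ * β * (15 / 16)))]

/-- Since `e^{3βt} ≥ e^{βt}` for `t = 2^{-m}`, the two tails satisfy `V ≥ e^{-2β} U`. -/
lemma tailSum_compare {β P : ℝ} (hβ : 0 < β) (hP : 0 < P) (n : ℕ) :
    Real.exp (-(2 * β)) * tailSum 1 β P n ≤ tailSum 3 β P n := by
  unfold tailSum
  rw [← tsum_mul_left]
  refine Summable.tsum_le_tsum (fun m => ?_)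
    ((wt_tail_summable (by norm_num) hβ hP n).mul_left _) (wt_tail_summable (by norm_num) hβ hP n)
  unfold wt
  have : (0 : ℝ) ≤ β * (1 / 2) ^ (m + n) := by positivity
  rw [mul_left_comm, ← Real.exp_add]
  gcongr
  nlinarith

/-! ### Ring masses -/

lemma ring_mass {α β P : ℝ} {H : Sig → ℝ} {ν : Measure Sig}
    (h : IsEigenData α β P H ν) {a : Fin 3} {κ : ℝ} (hk : PotRate α a κ) (m : ℕ) :
    ν.real (ringSet a m) = wt κ β P m * ν.real (ringSet a 0) := by
  induction m with
  | zero => simp [wt_zero]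
  | succ m ih =>
    have h1 := eigen_const h (isClopen_ringSet a (m + 1)) (isClopen_ringSet a m)
      (fun b x => cons_mem_ringSet a b m x)
      (fun x hx => hk m (cons a x) ((cons_mem_ringSet a a m x).2 ⟨rfl, hx⟩))
    have h3 : Real.exp (-P) * (Real.exp P * ν.real (ringSet a (m + 1)))
        = ν.real (ringSet a (m + 1)) := by
      rw [← mul_assoc, ← Real.exp_add]; simp
    rw [← h3, h1, ih, wt_succ]
    have : β * -(κ * (1 / 2 : ℝ) ^ (m + 1)) = -(κ * β * (1 / 2 : ℝ) ^ (m + 1)) := by ring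
    rw [this]
    ring

/-- The rings `[a^m*_a]`, `m ≥ 0`, exhaust `Σ` up to the `ν`-null point `a^∞`. -/
lemma ring_zero_mul_tailSum {α β P : ℝ} (hα : 1 ≤ α) (hβ : 0 < β) {H : Sig → ℝ} {ν : Measure Sig}
    (h : IsEigenData α β P H ν) {a : Fin 3} {κ : ℝ} (hκ : 0 ≤ κ) (hk : PotRate α a κ) :
    ν.real (ringSet a 0) * tailSum κ β P 0 = 1 := by
  have := h.prob
  have hsplit : ∀ m, ν.real (blockSet a m) = ν.real (ringSet a m) + ν.real (blockSet a (m + 1)) := by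
    intro m
    rw [← measureReal_union _ (isClopen_blockSet a (m + 1)).isOpen.measurableSet]
    · congr 1
      ext x
      constructor
      · intro hx
        by_cases hm : x m = a
        · right
          intro i hi
          rcases Nat.lt_succ_iff_lt_or_eq.1 hi with hi | hi
          · exact hx i hi
          · rw [hi]; exact hm
        · exact Or.inl ⟨hx, hm⟩
      · rintro (hx | hx)
        · exact hx.1
        · exact fun i hi => hx i (Nat.lt_succ_of_lt hi)
    · rw [Set.disjoint_left]
      intro x hx hx'
      exact hx.2 (hx' m (Nat.lt_succ_self m))
  have hsum : ∀ m, ∑ k ∈ Finset.range m, ν.real (ringSet a k) = 1 - ν.real (blockSet a m) := by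
    intro m
    induction m with
    | zero => simp [blockSet]
    | succ m ih => rw [Finset.sum_range_succ, ih, hsplit m]; ring
  have hlim : Tendsto (fun m => ν.real (blockSet a m)) atTop (𝓝 0) :=
    squeeze_zero (fun _ => measureReal_nonneg) (eigen_block_le hα hβ h a)
      (tendsto_pow_atTop_nhds_zero_of_lt_one (Real.exp_pos _).le (exp_neg_lt_one h.P_pos))
  have h1 : Tendsto (fun m => ∑ k ∈ Finset.range m, ν.real (ringSet a k)) atTop (𝓝 1) := by
    simp_rw [hsum]
    simpa using hlim.const_sub 1
  have h2 : HasSum (fun k => ν.real (ringSet a k)) (tailSum κ β P 0 * ν.real (ringSet a 0)) := by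
    rw [funext fun m => ring_mass h hk m]
    exact (wt_tail_summable hκ hβ h.P_pos 0).hasSum.mul_right _
  rw [mul_comm]
  exact tendsto_nhds_unique h2.tendsto_sum_nat h1

/-- Total mass one, written with `ν(Σ \ [a]) = 1 - ν([a])` and `ν([2]) = e^{-P-αβ}`. -/
lemma ring_zero_add {α β P : ℝ} {H : Sig → ℝ} {ν : Measure Sig} (h : IsEigenData α β P H ν) :
    ν.real (ringSet 0 0) + ν.real (ringSet 1 0) = 1 + Real.exp (-P) * Real.exp (-(α * β)) := by
  have := h.prob
  have hm : ∀ a : Fin 3, MeasurableSet (cyl a) := fun a => (isClopen_coord a 0).isOpen.measurableSet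
  have hc : ∀ a : Fin 3, ν.real (ringSet a 0) = 1 - ν.real (cyl a) := by
    intro a
    rw [← probReal_compl_eq_one_sub (hm a)]
    congr 1
    ext x; simp [ringSet, cyl]
  have h0 : ringSet 0 0 = cyl 1 ∪ cyl 2 := by
    ext x
    simp only [ringSet, cyl, Set.mem_ofPred_eq, Set.mem_union]
    generalize x 0 = y
    revert y; simp; decide
  have hd : Disjoint (cyl 1) (cyl 2) := by
    rw [Set.disjoint_left]
    intro x (hx : x 0 = 1) (hx' : x 0 = 2)
    rw [hx] at hx'; exact absurd hx' (by decide)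
  have h2 := eigen_const h (a := 2) (S := cyl 2) (T := Set.univ) (isClopen_coord 2 0) isClopen_univ
    (fun b x => by simp [cyl, cons_zero_eq]) (fun x _ => pot_two α x)
  have h3 : ν.real (cyl 2) = Real.exp (-P) * Real.exp (-(α * β)) := by
    have h3 : Real.exp (-P) * (Real.exp P * ν.real (cyl 2)) = ν.real (cyl 2) := by
      rw [← mul_assoc, ← Real.exp_add]; simp
    rw [← h3, h2]
    simp [mul_comm]
  rw [hc 1, ← h3, h0, measureReal_union hd (hm 2)]
  ring

/-! ### The eigenfunction on rings -/

/-- The bounded solution of `e^P s_m = e^{-κβ/2^{m+1}} s_{m+1} + K` is given by the tail sums. -/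
lemma recursion_solution {κ β P K C : ℝ} (hκ : 0 ≤ κ) (hβ : 0 < β) (hP : 0 < P) {s : ℕ → ℝ}
    (hs : ∀ m, |s m| ≤ C)
    (hrec : ∀ m, 1 ≤ m → Real.exp P * s m
      = Real.exp (-(κ * β * (1 / 2 : ℝ) ^ (m + 1))) * s (m + 1) + K) {n : ℕ} (hn : 1 ≤ n) :
    wt κ β P n * s n = Real.exp (-P) * K * tailSum κ β P n := by
  -- the discrepancy `D` between the two sides is constant in `m` and tends to zero
  set D : ℕ → ℝ := fun m => wt κ β P m * s m - Real.exp (-P) * K * tailSum κ β P m with hD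
  have hstep : ∀ m, 1 ≤ m → D (m + 1) = D m := by
    intro m hm
    have h1 : s m = Real.exp (-P) * (Real.exp P * s m) := by
      rw [← mul_assoc, ← Real.exp_add]; simp
    simp only [hD]
    rw [tailSum_succ hκ hβ hP m, h1, hrec m hm, wt_succ]
    ring
  have hconst : ∀ k, D (k + n) = D n := by
    intro k
    induction k with
    | zero => simp
    | succ k ih => rw [← ih, add_right_comm, hstep _ (by omega)]
  have hwt := (wt_summable hκ hβ hP).tendsto_atTop_zero
  have h1 : Tendsto (fun m => wt κ β P m * s m) atTop (𝓝 0) := by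
    refine squeeze_zero_norm (a := fun m => wt κ β P m * C) (fun m => ?_)
      (by simpa using hwt.mul_const C)
    rw [norm_mul, Real.norm_of_nonneg (wt_pos κ β P m).le]
    exact mul_le_mul_of_nonneg_left (hs m) (wt_pos κ β P m).le
  have h2 : Tendsto (fun m => tailSum κ β P m) atTop (𝓝 0) := tendsto_sum_nat_add (wt κ β P)
  have h3 : Tendsto D atTop (𝓝 0) := by
    simpa using h1.sub (h2.const_mul (Real.exp (-P) * K))
  have h4 : Tendsto (fun k => D (k + n)) atTop (𝓝 0) := (tendsto_add_atTop_iff_nat n).2 h3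
  simp_rw [hconst] at h4
  have h5 := tendsto_nhds_unique h4 tendsto_const_nhds
  simp only [hD] at h5
  linarith

/-- The values of the eigenfunction on rings: with `K` and `K'` the constant contributions of the
two letters different from `0`, respectively `1`. -/
lemma eigenfun_rings {α β P : ℝ} (hβ : 0 < β) {H : Sig → ℝ} {ν : Measure Sig}
    (h : IsEigenData α β P H ν) (hR : LocallyRingConstant H) :
    ∃ K K' r : ℝ, 0 < r ∧ r ≤ K ∧ K' = K * tailSum 1 β P 1 + r ∧
      (∀ n, 1 ≤ n → wt 1 β P n * H (ringPt 0 2 n) = Real.exp (-P) * K * tailSum 1 β P n) ∧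
      (∀ n, 1 ≤ n → wt 3 β P n * H (ringPt 1 2 n) = Real.exp (-P) * K' * tailSum 3 β P n) := by
  obtain ⟨hR2, hR0, hR1⟩ := hR
  obtain ⟨C, hC⟩ : ∃ C, ∀ x, |H x| ≤ C := by
    obtain ⟨C, hC⟩ := isCompact_univ.exists_bound_of_continuousOn h.H_cont.continuousOn
    exact ⟨C, fun x => hC x (Set.mem_univ x)⟩
  have hmem : ∀ a b : Fin 3, a ≠ b → ∀ m, 1 ≤ m → cons b (ringPt a 2 m) ∈ ringSet b 1 := by
    intro a b hab m hm
    rw [cons_mem_ringSet]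
    refine ⟨rfl, by simp, ?_⟩
    have : ringPt a 2 m 0 = a := by simp [ringPt]; omega
    rw [this]; exact hab
  have hmem2 : ∀ a : Fin 3, (2 : Fin 3) ≠ a → ∀ m, cons a (ringPt a 2 m) ∈ ringSet a (m + 1) :=
    fun a ha m => (cons_mem_ringSet a a m _).2 ⟨rfl, ringPt_mem ha m⟩
  have h20 : (2 : Fin 3) ≠ 0 := by decide
  have h21 : (2 : Fin 3) ≠ 1 := by decide
  have h2 : ∀ x, H (cons 2 x) = H (cons 2 zeroSeq) := fun x => hR2 _ rfl _ rfl
  set p := Real.exp (-(1 * β * (1 / 2 : ℝ) ^ 1)) * H (ringPt 0 2 1) with hp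
  set q := Real.exp (-(3 * β * (1 / 2 : ℝ) ^ 1)) * H (ringPt 1 2 1) with hq
  set r := Real.exp (-(α * β)) * H (cons 2 zeroSeq) with hr
  have hq0 : 0 < q := mul_pos (Real.exp_pos _) (h.H_pos _)
  have hr0 : 0 < r := mul_pos (Real.exp_pos _) (h.H_pos _)
  have e0 : ∀ m, ∀ x, x ∈ ringSet 0 (m + 1) → Real.exp (β * pot α x) * H x
      = Real.exp (-(1 * β * (1 / 2 : ℝ) ^ (m + 1))) * H (ringPt 0 2 (m + 1)) := by
    intro m x hx
    rw [potRate_zero α m x hx, hR0 (m + 1) (by omega) x hx _ (ringPt_mem h20 (m + 1))]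
    congr 2; ring
  have e1 : ∀ m, ∀ x, x ∈ ringSet 1 (m + 1) → Real.exp (β * pot α x) * H x
      = Real.exp (-(3 * β * (1 / 2 : ℝ) ^ (m + 1))) * H (ringPt 1 2 (m + 1)) := by
    intro m x hx
    rw [potRate_one α m x hx, hR1 (m + 1) (by omega) x hx _ (ringPt_mem h21 (m + 1))]
    congr 2; ring
  have e2 : ∀ x, Real.exp (β * pot α (cons 2 x)) * H (cons 2 x) = r := by
    intro x
    rw [pot_two, h2 x, hr]
    congr 2; ring
  have s0 : ∀ n, 1 ≤ n → wt 1 β P n * H (ringPt 0 2 n)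
      = Real.exp (-P) * (q + r) * tailSum 1 β P n := by
    intro n hn
    refine recursion_solution (s := fun m => H (ringPt 0 2 m)) (by norm_num) hβ h.P_pos
      (fun m => hC _) (fun m hm => ?_) hn
    have := h.eigenFun (ringPt 0 2 m)
    rw [transfer, Fin.sum_univ_three, e2, e0 m _ (hmem2 0 h20 m),
      e1 0 _ (hmem 0 1 (by decide) m hm)] at this
    rw [← this, add_assoc]
  have s1 : ∀ n, 1 ≤ n → wt 3 β P n * H (ringPt 1 2 n)
      = Real.exp (-P) * (p + r) * tailSum 3 β P n := by
    intro n hn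
    refine recursion_solution (s := fun m => H (ringPt 1 2 m)) (by norm_num) hβ h.P_pos
      (fun m => hC _) (fun m hm => ?_) hn
    have := h.eigenFun (ringPt 1 2 m)
    rw [transfer, Fin.sum_univ_three, e2, e1 m _ (hmem2 1 h21 m),
      e0 0 _ (hmem 1 0 (by decide) m hm)] at this
    rw [← this, hp]
    ring
  refine ⟨q + r, p + r, r, hr0, by linarith, ?_, s0, s1⟩
  -- the case `n = 1` of the formula on the `0`-rings says `p = K U`
  have h1 := s0 1 le_rfl
  rw [wt_succ, wt_zero, zero_add] at h1
  have h2 : Real.exp (-P) * p = Real.exp (-P) * ((q + r) * tailSum 1 β P 1) := by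
    rw [hp]; linarith
  rw [mul_left_cancel₀ (Real.exp_pos _).ne' h2]

/-! ### The Gibbs ratio -/

lemma gibbs_ratio_eq {H : Sig → ℝ} {ν : Measure Sig} [IsProbabilityMeasure ν]
    (hc : Continuous H) (hpos : ∀ x, 0 < H x) {S T : Set Sig} (hS : MeasurableSet S)
    (hT : MeasurableSet T) {s t : ℝ} (hs : ∀ x ∈ S, H x = s) (ht : ∀ x ∈ T, H x = t)
    (hs0 : 0 ≤ s) (ht0 : 0 ≤ t) :
    (gibbs H ν S).toReal / (gibbs H ν T).toReal = (ν.real S * s) / (ν.real T * t) := by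
  have key : ∀ {S : Set Sig} {s : ℝ}, MeasurableSet S → (∀ x ∈ S, H x = s) → 0 ≤ s →
      (gibbs H ν S).toReal
        = ((ν.withDensity (fun x => ENNReal.ofReal (H x)) Set.univ)⁻¹).toReal * (ν.real S * s) := by
    intro S s hS hs hs0
    rw [gibbs, Measure.smul_apply, smul_eq_mul, ENNReal.toReal_mul, withDensity_apply _ hS,
      setLIntegral_congr_fun (g := fun _ => ENNReal.ofReal s) hS (fun x hx => by simp [hs x hx]),
      setLIntegral_const, ENNReal.toReal_mul, ENNReal.toReal_ofReal hs0, mul_comm s]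
    rfl
  rw [key hS hs hs0, key hT ht ht0, mul_div_mul_left]
  have hm : Measurable fun x => ENNReal.ofReal (H x) := hc.measurable.ennreal_ofReal
  rw [withDensity_apply _ MeasurableSet.univ, setLIntegral_univ, ENNReal.toReal_ne_zero]
  constructor
  · -- the total mass is finite because `H` is bounded
    obtain ⟨C, hC⟩ := isCompact_univ.exists_bound_of_continuousOn hc.continuousOn
    rw [ENNReal.inv_ne_zero]
    have : ∫⁻ x, ENNReal.ofReal (H x) ∂ν ≤ ∫⁻ _, ENNReal.ofReal C ∂ν :=
      lintegral_mono fun x => ENNReal.ofReal_le_ofReal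
        ((le_abs_self _).trans (hC x (Set.mem_univ x)))
    refine ne_top_of_le_ne_top ?_ this
    simp
  · rw [ENNReal.inv_ne_top]
    intro h0
    rw [lintegral_eq_zero_iff hm] at h0
    obtain ⟨x, hx⟩ := h0.exists
    have := hpos x
    simp at hx
    linarith

/-! ### Estimates for large `β` -/

/-- The two-sided bound on the ratio, reduced to inequalities between real numbers: `U`, `V` are the
full sums, `Un`, `Vn` the tails, `x = 1/(1+U)` and `y = 1/(1+V)` the masses of `Σ \ [0]`, `Σ \ [1]`,
and `g = e^{-β}`. -/
lemma ratio_bounds {U V Un Vn K K' r x y e g : ℝ} (hV : 0 < V) (hK : 0 < K) (hr : 0 < r)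
    (hrK : r ≤ K) (hK' : K' = K * U + r) (hx : x * (1 + U) = 1) (hy : y * (1 + V) = 1)
    (hxy : x + y = 1 + e) (he0 : 0 < e) (heg : e ≤ g) (hUV : g ^ 2 * U ≤ V)
    (hU1 : 1 ≤ U) (hUn : U ≤ 2 * Un) (hUnU : Un ≤ U) (hVn : V ≤ 2 * Vn) (hVnV : Vn ≤ V) :
    1 / 4 ≤ (K * Un * x) / (K' * Vn * y) ∧ (K * Un * x) / (K' * Vn * y) ≤ 32 := by
  have hU : 0 < U := by linarith
  have hx' : x = 1 / (1 + U) := by field_simp; linarith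
  have hy' : y = 1 / (1 + V) := by field_simp; linarith
  have hx0 : 0 < x := by rw [hx']; positivity
  have hy0 : 0 < y := by rw [hy']; positivity
  have hK'0 : 0 < K' := by rw [hK']; positivity
  have hVn0 : 0 < Vn := by linarith
  have hUn0 : 0 < Un := by linarith
  -- the identity `s (1 + V) = V (1 + U)` for `s = 1 - e (1 + U)`
  have hrel : (1 - e * (1 + U)) * (1 + V) = V * (1 + U) := by
    have h1 : (x + y) * ((1 + U) * (1 + V)) = (1 + V) + (1 + U) := by
      linear_combination (1 + V) * hx + (1 + U) * hy
    rw [hxy] at h1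
    linarith
  obtain ⟨s, hs⟩ : ∃ s, s = 1 - e * (1 + U) := ⟨_, rfl⟩
  rw [← hs] at hrel
  have hs1 : s ≤ 1 := by rw [hs]; nlinarith
  have hs2 : 1 / 16 ≤ s := by
    by_contra hcon
    push Not at hcon
    have hg0 : 0 < g := by linarith
    have h1 : 1 / 2 ≤ g * (1 + U) := by
      have : e * (1 + U) ≤ g * (1 + U) := by gcongr
      rw [hs] at hcon; linarith
    have h2 : 1 / 4 ≤ (g * (1 + U)) ^ 2 := by nlinarith
    have h3 : 1 / 8 ≤ V * (1 + U) := by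
      have h4 : g ^ 2 * ((1 + U) / 2) ≤ V := le_trans (by gcongr; linarith) hUV
      have h5 : g ^ 2 * ((1 + U) / 2) * (1 + U) ≤ V * (1 + U) := by gcongr
      nlinarith
    rcases le_total V 1 with hV1 | hV1
    · nlinarith
    · nlinarith
  -- clear `x, y`: the ratio becomes `K Un (1+V) / (K' Vn (1+U))`
  have hratio : (K * Un * x) / (K' * Vn * y) = (K * Un * (1 + V)) / (K' * Vn * (1 + U)) := by
    rw [hx', hy']; field_simp
  have hd : 0 < K' * Vn * (1 + U) := by positivity
  have hlo : K * U ≤ K' := by linarith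
  have hhi : K' ≤ K * (1 + U) := by linarith
  rw [hratio]
  constructor
  · rw [le_div_iff₀ hd]
    have h1 : K' * Vn * (1 + U) ≤ K * (1 + U) * V * (1 + U) := by gcongr
    have h2 : K * (1 + U) * V * (1 + U) = K * (1 + U) * (s * (1 + V)) := by rw [hrel]; ring
    have h3 : K * (1 + U) * (s * (1 + V)) ≤ K * (4 * Un) * (1 * (1 + V)) := by
      gcongr; linarith
    linarith
  · rw [div_le_iff₀ hd]
    have h1 : K * U * (V / 2) * (1 + U) ≤ K' * Vn * (1 + U) := by
      gcongr; linarith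
    have h2 : K * U * (V / 2) * (1 + U) = K * U / 2 * (s * (1 + V)) := by rw [hrel]; ring
    have h3 : K * U / 2 * (1 / 16 * (1 + V)) ≤ K * U / 2 * (s * (1 + V)) := by gcongr
    have h4 : K * Un * (1 + V) ≤ K * U * (1 + V) := by gcongr
    linarith

/-- The pressure is at most `e^{-7β/4}`: otherwise `U V` and `e^{-P-αβ} (1 + U) (1 + V)` would both
be small, whereas total mass one forces them to add up to one. -/
lemma pressure_le {α β P : ℝ} (hα : 1 ≤ α) (hβ : 0 < β) (hP : 0 < P) {x y : ℝ}
    (hx : x * tailSum 1 β P 0 = 1) (hy : y * tailSum 3 β P 0 = 1)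
    (hxy : x + y = 1 + Real.exp (-P) * Real.exp (-(α * β)))
    (hbig : 61 * Real.exp (-(3 * β / 16)) < 1) : P ≤ Real.exp (-(7 * β / 4)) := by
  by_contra hcon
  push Not at hcon
  have hU := tailSum_one_le (κ := 1) (by norm_num) hβ hP
  have hV := tailSum_one_le (κ := 3) (by norm_num) hβ hP
  have hU0 := tailSum_pos (κ := 1) (by norm_num) hβ hP 1
  have hV0 := tailSum_pos (κ := 3) (by norm_num) hβ hP 1
  rw [tailSum_succ (by norm_num) hβ hP, wt_zero, zero_add] at hx hy
  set U := tailSum 1 β P 1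
  set V := tailSum 3 β P 1
  have hinv : ∀ t : ℝ, Real.exp t / P ≤ Real.exp (t + 7 * β / 4) := by
    intro t
    rw [div_le_iff₀ hP]
    calc Real.exp t = Real.exp (t + 7 * β / 4) * Real.exp (-(7 * β / 4)) := by
          rw [← Real.exp_add]; congr 1; ring
      _ ≤ _ := by gcongr
  have hU2 : U ≤ 5 * Real.exp (13 * β / 16) := by
    have h1 := hinv (-(1 * β * (15 / 16)))
    have h2 : Real.exp (-(1 * β * (15 / 16)) + 7 * β / 4) = Real.exp (13 * β / 16) := by
      congr 1; ring
    have h3 : Real.exp (-(1 * β / 2)) ≤ Real.exp (13 * β / 16) := Real.exp_le_exp.2 (by linarith)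
    linarith
  have hV2 : V ≤ 5 * Real.exp (-(17 * β / 16)) := by
    have h1 := hinv (-(3 * β * (15 / 16)))
    have h2 : Real.exp (-(3 * β * (15 / 16)) + 7 * β / 4) = Real.exp (-(17 * β / 16)) := by
      congr 1; ring
    have h3 : Real.exp (-(3 * β / 2)) ≤ Real.exp (-(17 * β / 16)) :=
      Real.exp_le_exp.2 (by linarith)
    linarith
  have h1 : U * V ≤ 25 * Real.exp (-(3 * β / 16)) := by
    calc U * V ≤ (5 * Real.exp (13 * β / 16)) * (5 * Real.exp (-(17 * β / 16))) := by gcongr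
      _ = 25 * Real.exp (13 * β / 16 + -(17 * β / 16)) := by rw [Real.exp_add]; ring
      _ ≤ _ := by gcongr; linarith
  have he : Real.exp (-P) * Real.exp (-(α * β)) ≤ Real.exp (-β) := by
    rw [← Real.exp_add, Real.exp_le_exp]; nlinarith
  have h2 : Real.exp (-P) * Real.exp (-(α * β)) * ((1 + U) * (1 + V))
      ≤ 36 * Real.exp (-(3 * β / 16)) := by
    have h3 : 1 + U ≤ 6 * Real.exp (13 * β / 16) := by
      have : 1 ≤ Real.exp (13 * β / 16) := Real.one_le_exp (by positivity)
      linarith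
    have h4 : 1 + V ≤ 6 := by
      have : Real.exp (-(17 * β / 16)) ≤ 1 := Real.exp_le_one_iff.2 (by linarith)
      linarith
    calc _ ≤ Real.exp (-β) * ((6 * Real.exp (13 * β / 16)) * 6) := by gcongr
      _ = 36 * Real.exp (-β + 13 * β / 16) := by rw [Real.exp_add]; ring
      _ ≤ _ := by gcongr; linarith
  have h3 : (x + y) * ((1 + U) * (1 + V)) = (1 + V) + (1 + U) := by
    linear_combination (1 + V) * hx + (1 + U) * hy
  rw [hxy] at h3
  linarith

/-- With `P ≤ e^{-7β/4}`, discarding the first terms costs at most half of the sum. -/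
lemma tail_half {κ β P : ℝ} (hκ : 0 ≤ κ) (hκ3 : κ ≤ 3) (hβ : 0 < β) (hP : 0 < P)
    (hP2 : P ≤ Real.exp (-(7 * β / 4))) (k : ℕ)
    (hbig : (k : ℝ) * Real.exp (k + 1) ≤ Real.exp (β / 4)) :
    tailSum κ β P 1 ≤ 2 * tailSum κ β P (k + 1) ∧ tailSum κ β P (k + 1) ≤ tailSum κ β P 1 ∧
      Real.exp (-(κ * β)) * Real.exp (7 * β / 4) * Real.exp (-((k : ℝ) + 1))
        ≤ tailSum κ β P (k + 1) := by
  have hP1 : P ≤ 1 := hP2.trans (Real.exp_le_one_iff.2 (by linarith))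
  have h1 := tailSum_one_le_add hκ hβ hP k
  have h2 : Real.exp (-(κ * β)) * Real.exp (7 * β / 4) * Real.exp (-((k : ℝ) + 1))
      ≤ tailSum κ β P (k + 1) := by
    refine le_trans ?_ (tailSum_ge hκ hβ hP (k + 1))
    have h3 : Real.exp (7 * β / 4) ≤ P⁻¹ := by
      rw [le_inv_comm₀ (Real.exp_pos _) hP, ← Real.exp_neg]; exact hP2
    have h4 : Real.exp (-((k : ℝ) + 1)) ≤ Real.exp (-P) ^ (k + 1) := by
      rw [← Real.exp_nat_mul, Real.exp_le_exp]
      push_cast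
      nlinarith [(Nat.cast_nonneg k : (0 : ℝ) ≤ k)]
    calc _ ≤ Real.exp (-(κ * β)) * P⁻¹ * Real.exp (-P) ^ (k + 1) := by gcongr
      _ = _ := by field_simp
  have h5 : (k : ℝ) * Real.exp (-(κ * β / 2))
      ≤ Real.exp (-(κ * β)) * Real.exp (7 * β / 4) * Real.exp (-((k : ℝ) + 1)) := by
    have h6 : (k : ℝ) ≤ Real.exp (β / 4) * Real.exp (-((k : ℝ) + 1)) := by
      calc (k : ℝ) = k * Real.exp (k + 1) * Real.exp (-((k : ℝ) + 1)) := by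
            rw [mul_assoc, ← Real.exp_add]; simp
        _ ≤ _ := by gcongr
    calc _ ≤ Real.exp (β / 4) * Real.exp (-((k : ℝ) + 1)) * Real.exp (-(κ * β / 2)) := by gcongr
      _ = Real.exp (β / 4 + -(κ * β / 2)) * Real.exp (-((k : ℝ) + 1)) := by
          rw [Real.exp_add]; ring
      _ ≤ Real.exp (-(κ * β) + 7 * β / 4) * Real.exp (-((k : ℝ) + 1)) := by
          refine mul_le_mul_of_nonneg_right (Real.exp_le_exp.2 ?_) (Real.exp_pos _).le
          nlinarith
      _ = _ := by rw [Real.exp_add]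
  refine ⟨by linarith, ?_, h2⟩
  clear h1 h2 h5 hbig
  induction k with
  | zero => simp
  | succ k ih =>
    have h1 := tailSum_succ hκ hβ hP (k + 1)
    have h2 := wt_pos κ β P (k + 1)
    linarith

/-- Non-asymptotic form of the result: for large `β` the ratio of ring masses lies in `[1/4, 32]`. -/
lemma gibbs_ratio_bounds {α β P : ℝ} (hα : 1 ≤ α) (hβ : 0 < β) {H : Sig → ℝ} {ν : Measure Sig}
    (h : IsEigenData α β P H ν) (hR : LocallyRingConstant H) (k : ℕ)
    (hb1 : 61 * Real.exp (-(3 * β / 16)) < 1)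
    (hb2 : ((k : ℝ) + 1) * Real.exp (k + 1) ≤ Real.exp (β / 4)) :
    1 / 4 ≤ (gibbs H ν (ringSet 0 (k + 1))).toReal / (gibbs H ν (ringSet 1 (k + 1))).toReal ∧
    (gibbs H ν (ringSet 0 (k + 1))).toReal / (gibbs H ν (ringSet 1 (k + 1))).toReal ≤ 32 := by
  have := h.prob
  have hP := h.P_pos
  have h20 : (2 : Fin 3) ≠ 0 := by decide
  have h21 : (2 : Fin 3) ≠ 1 := by decide
  have hx := ring_zero_mul_tailSum hα hβ h (by norm_num) (potRate_zero α)
  have hy := ring_zero_mul_tailSum hα hβ h (by norm_num) (potRate_one α)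
  have hxy := ring_zero_add h
  have hP2 := pressure_le hα hβ hP hx hy hxy hb1
  obtain ⟨K, K', r, hr, hrK, hK', s0, s1⟩ := eigenfun_rings hβ h hR
  have hb3 : (k : ℝ) * Real.exp (k + 1) ≤ Real.exp (β / 4) := by
    have := Real.exp_pos ((k : ℝ) + 1)
    linarith
  obtain ⟨u1, u2, u3⟩ := tail_half (κ := 1) (by norm_num) (by norm_num) hβ hP hP2 k hb3
  obtain ⟨v1, v2, -⟩ := tail_half (κ := 3) (by norm_num) (by norm_num) hβ hP hP2 k hb3
  have hU1 : 1 ≤ tailSum 1 β P 1 := by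
    refine le_trans ?_ (u3.trans u2)
    rw [← Real.exp_add, ← Real.exp_add]
    apply Real.one_le_exp
    have h1 : Real.exp ((k : ℝ) + 1) ≤ Real.exp (β / 4) := by
      refine le_trans ?_ hb2
      have := Real.exp_pos ((k : ℝ) + 1)
      nlinarith [(Nat.cast_nonneg k : (0 : ℝ) ≤ k)]
    have h2 := Real.exp_le_exp.1 h1
    linarith
  rw [tailSum_succ (by norm_num) hβ hP, wt_zero, zero_add] at hx hy
  have hmain := ratio_bounds (g := Real.exp (-β)) (tailSum_pos (κ := 3) (by norm_num) hβ hP 1)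
    (hr.trans_le hrK) hr hrK hK' hx hy hxy (by positivity)
    (by rw [← Real.exp_add, Real.exp_le_exp]; nlinarith)
    (by
      have := tailSum_compare hβ hP 1
      rwa [← Real.exp_nat_mul, show ((2 : ℕ) : ℝ) * -β = -(2 * β) by push_cast; ring])
    hU1 u1 u2 v1 v2
  have hn : 1 ≤ k + 1 := by omega
  have hratio := gibbs_ratio_eq (ν := ν) h.H_cont h.H_pos
    (isClopen_ringSet 0 (k + 1)).isOpen.measurableSet
    (isClopen_ringSet 1 (k + 1)).isOpen.measurableSet
    (fun x hx => hR.2.1 (k + 1) hn x hx _ (ringPt_mem h20 (k + 1)))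
    (fun x hx => hR.2.2 (k + 1) hn x hx _ (ringPt_mem h21 (k + 1)))
    (h.H_pos _).le (h.H_pos _).le
  rw [ring_mass h (potRate_zero α), ring_mass h (potRate_one α), mul_right_comm (wt 1 β P (k + 1)),
    mul_right_comm (wt 3 β P (k + 1)), s0 _ hn, s1 _ hn] at hratio
  have hcancel : ∀ A B C D E F : ℝ,
      Real.exp (-P) * A * B * C / (Real.exp (-P) * D * E * F) = A * B * C / (D * E * F) := by
    intro A B C D E F
    rw [mul_assoc, mul_assoc, mul_assoc (Real.exp (-P) * D), mul_assoc (Real.exp (-P)),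
      mul_div_mul_left _ _ (Real.exp_pos _).ne', mul_assoc A, mul_assoc D]
  rw [hcancel] at hratio
  rw [hratio]
  exact hmain

/-- For `α ≥ 1` and each fixed `n ≥ 1`, `(1/β)·log(μ_β[0^n*₀]/μ_β[1^n*₁]) → 0`. -/
theorem gibbs_ratio_subexponential (α : ℝ) (hα : 1 ≤ α) (n : ℕ) (hn : 1 ≤ n)
    (P : ℝ → ℝ) (H : ℝ → Sig → ℝ) (ν : ℝ → Measure Sig)
    (hE : ∀ β > (0 : ℝ), IsEigenData α β (P β) (H β) (ν β))
    (hRC : ∀ β > (0 : ℝ), LocallyRingConstant (H β)) :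
    Tendsto (fun β => (1 / β) *
        Real.log ((gibbs (H β) (ν β) (ringSet 0 n)).toReal /
          (gibbs (H β) (ν β) (ringSet 1 n)).toReal))
      atTop (nhds 0) := by
  obtain ⟨k, rfl⟩ : ∃ k, n = k + 1 := ⟨n - 1, by omega⟩
  have hexp : Tendsto (fun β : ℝ => 61 * Real.exp (-(3 * β / 16))) atTop (𝓝 0) := by
    have h1 : Tendsto (fun β : ℝ => 3 * β / 16) atTop atTop := by
      have := tendsto_id.const_mul_atTop (show (0 : ℝ) < 3 / 16 by norm_num)
      exact this.congr fun β => by simp only [id]; ring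
    simpa using (Real.tendsto_exp_neg_atTop_nhds_zero.comp h1).const_mul 61
  have hexp2 : Tendsto (fun β : ℝ => Real.exp (β / 4)) atTop atTop :=
    Real.tendsto_exp_atTop.comp (tendsto_id.atTop_div_const (by norm_num))
  have hinv : Tendsto (fun β : ℝ => (1 / β) * Real.log 32) atTop (𝓝 0) := by
    simpa using tendsto_inv_atTop_zero.mul_const (Real.log 32)
  refine squeeze_zero_norm' ?_ hinv
  filter_upwards [eventually_gt_atTop (0 : ℝ), hexp.eventually_lt_const one_pos,
    hexp2.eventually_ge_atTop (((k : ℝ) + 1) * Real.exp (k + 1))] with β hβ hb1 hb2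
  obtain ⟨hlo, hhi⟩ := gibbs_ratio_bounds hα hβ (hE β hβ) (hRC β hβ) k hb1 hb2
  rw [norm_mul, Real.norm_of_nonneg (by positivity : 0 ≤ 1 / β)]
  refine mul_le_mul_of_nonneg_left ?_ (by positivity)
  rw [Real.norm_eq_abs, abs_le]
  constructor
  · rw [← Real.log_inv]
    exact Real.log_le_log (by norm_num) (le_trans (by norm_num) hlo)
  · exact Real.log_le_log (by linarith) hhi

end
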